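/- arXiv:1911.06450 — 5 statements merged into one kernel-verified Lean document; each statement's English description precedes it below -/
import Mathlib

section
/- Consider a SISO networked relative coupling system with subsystem matrices A ∈ ℝ^{n×n}, b ∈ ℝ^{n×1}, c ∈ ℝ^{1×n} (n ≥ 1), a digraph G_sys on vertices {1,…,N} without self-loops, and a driving set I_u ⊆ {1,…,N} with |I_u| < N. Then the system is structurally controllable (i.e., there exists a weight vector w ∈ ℝ^{|E|} such that the pair (I_N ⊗ A − L(w) ⊗ (b c), Δ ⊗ b) is controllable) if and only if: (1) (A, b) is controllable and (A, c) is observable, and (2) the network is globally input-reachable. -/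
open Matrix
open scoped Kronecker

noncomputable section

/-- Kalman-matrix controllability of the pair `(M, Q)`. -/
def IsCtrb {R : Type*} [CommRing R] {ι κ : Type*} [Fintype ι] [Fintype κ] [DecidableEq ι]
    (M : Matrix ι ι R) (Q : Matrix ι κ R) : Prop :=
  (Matrix.of fun (i : ι) (jk : Fin (Fintype.card ι) × κ) =>
      (M ^ (jk.1 : ℕ) * Q) i jk.2).rank = Fintype.card ι

/-- Observability of `(M, c)`: controllability of `(Mᵀ, cᵀ)`. -/
def IsObsv {R : Type*} [CommRing R] {ι : Type*} [Fintype ι] [DecidableEq ι]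
    (M : Matrix ι ι R) (c : Matrix (Fin 1) ι R) : Prop :=
  IsCtrb Mᵀ cᵀ

/-- The weighted Laplacian of a digraph with edge set `E`:
`L(w)_{ij} = -w_{(j,i)}` for `i ≠ j` with `(j,i) ∈ E`, zero for other off-diagonal entries,
and diagonal entries making every row sum to zero. -/
def lapMat {R : Type*} [CommRing R] {N : ℕ} (E : Finset (Fin N × Fin N))
    (w : Fin N × Fin N → R) : Matrix (Fin N) (Fin N) R :=
  Matrix.of fun i j =>
    if i = j then ∑ k ∈ Finset.univ.filter (fun k => k ≠ i ∧ (k, i) ∈ E), w (k, i)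
    else if (j, i) ∈ E then -w (j, i) else 0

/-- The `N × |I_u|` matrix whose columns are the standard basis vectors `e_i`, `i ∈ I_u`. -/
def deltaMat {R : Type*} [CommRing R] {N : ℕ} (Iu : Finset (Fin N)) :
    Matrix (Fin N) {i // i ∈ Iu} R :=
  Matrix.of fun i j => if i = (j : Fin N) then 1 else 0

/-- Vertex `i` is reachable by a directed path (possibly of length zero) from a driving vertex. -/
def inputReachable {N : ℕ} (E : Finset (Fin N × Fin N)) (Iu : Finset (Fin N)) (i : Fin N) : Prop :=
  ∃ s ∈ Iu, Relation.ReflTransGen (fun a b => (a, b) ∈ E) s i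

/-!
By the Popov–Belevitch–Hautus test, controllability over an algebraically closed field means that no
nonzero left eigenvector of the state matrix is annihilated by the input matrix, and controllability
is insensitive to field extensions. A left eigenvector of `I ⊗ A - L ⊗ (b c)` is a matrix `X` with
`Aᵀ X = μ X + cᵀ (bᵀ X L)`. If `(A, c)` is observable, then either `bᵀ X L = 0` or `bᵀ X` is a
multiple of `bᵀ X L`, so `bᵀ X` is zero or a left eigenvector of `L`, and the network test reduces
to the tests for `(A, b)` and `(L, Δ)`. The latter holds for the Laplacian of a spanning forest with
distinct nonzero weights: every vertex in the support of a left eigenvector with eigenvalue `μ` is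
an ancestor of the one vertex of weight `μ`, and the equation fails at the parent of the shallowest
vertex of the support.

Conversely, a right eigenvector `v` of `A` with `c v = 0` makes every `x ⊗ v` a right eigenvector of
the network for one eigenvalue, whose multiplicity is then too large for fewer than `N` inputs;
and unreachable vertices are unaffected by the input.
-/

section Kalman

variable {ι κ K : Type*} [Fintype ι] [DecidableEq ι]

/-- The Kalman matrix `[Q, MQ, M²Q, …]`; its columns are indexed by a power of `M` and a column
of `Q`. -/
def kalmanMatrix {R : Type*} [CommRing R] (M : Matrix ι ι R) (Q : Matrix ι κ R) :
    Matrix ι (Fin (Fintype.card ι) × κ) R :=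
  Matrix.of fun i jk => (M ^ (jk.1 : ℕ) * Q) i jk.2

theorem kalmanMatrix_map {R S : Type*} [CommRing R] [CommRing S] (f : R →+* S)
    (M : Matrix ι ι R) (Q : Matrix ι κ R) :
    kalmanMatrix (M.map f) (Q.map f) = (kalmanMatrix M Q).map f := by
  ext i ⟨k, q⟩
  simp only [kalmanMatrix, of_apply, map_apply, ← Matrix.map_pow, ← Matrix.map_mul]

variable [Field K]

theorem vecMul_kalmanMatrix_eq_zero_iff {M : Matrix ι ι K} {Q : Matrix ι κ K} {y : ι → K} :
    y ᵥ* kalmanMatrix M Q = 0 ↔ ∀ k : ℕ, y ᵥ* (M ^ k * Q) = 0 := by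
  refine ⟨fun h k => ?_, fun h => funext fun jk => congrFun (h jk.1) jk.2⟩
  rw [M.pow_eq_aeval_mod_charpoly k, Polynomial.aeval_eq_sum_range, Matrix.sum_mul, vecMul_sum]
  refine Finset.sum_eq_zero fun i _ => ?_
  rw [smul_mul, vecMul_smul]
  by_cases hi : i < Fintype.card ι
  · have hzero : y ᵥ* (M ^ i * Q) = 0 := funext fun q => congrFun h (⟨i, hi⟩, q)
    rw [hzero, smul_zero]
  · rw [Polynomial.coeff_eq_zero_of_degree_lt, zero_smul]
    refine (Polynomial.degree_modByMonic_lt _ M.charpoly_monic).trans_le ?_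
    rw [M.charpoly_degree_eq_dim]
    exact_mod_cast not_lt.1 hi

variable [Fintype κ]

theorem isCtrb_iff_linearIndependent_row (M : Matrix ι ι K) (Q : Matrix ι κ K) :
    IsCtrb M Q ↔ LinearIndependent K (kalmanMatrix M Q).row := by
  change (kalmanMatrix M Q).rank = Fintype.card ι ↔ _
  rw [linearIndependent_iff_card_eq_finrank_span, rank_eq_finrank_span_row, eq_comm]
  rfl

theorem isCtrb_map_algebraMap_iff (L : Type*) [Field L] [Algebra K L] (M : Matrix ι ι K)
    (Q : Matrix ι κ K) :
    IsCtrb (M.map (algebraMap K L)) (Q.map (algebraMap K L)) ↔ IsCtrb M Q := by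
  rw [isCtrb_iff_linearIndependent_row, isCtrb_iff_linearIndependent_row, kalmanMatrix_map]
  exact linearIndependent_algebraMap_comp_iff

theorem IsCtrb.eq_univ_of_forall_apply_eq_zero {M : Matrix ι ι K} {Q : Matrix ι κ K}
    (h : IsCtrb M Q) {S : Set ι} (hM : ∀ i ∉ S, ∀ j ∈ S, M i j = 0)
    (hQ : ∀ i ∉ S, ∀ q, Q i q = 0) : S = Set.univ := by
  have hpow (k : ℕ) : ∀ i ∉ S, ∀ q, (M ^ k * Q) i q = 0 := by
    induction k with
    | zero => simpa using hQ
    | succ k ih =>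
      intro i hi q
      rw [pow_succ', Matrix.mul_assoc, mul_apply]
      refine Finset.sum_eq_zero fun j _ => ?_
      by_cases hj : j ∈ S
      · rw [hM i hi j hj, zero_mul]
      · rw [ih j hj, mul_zero]
  by_contra! hS
  obtain ⟨i, hi⟩ := (Set.ne_univ_iff_exists_notMem S).1 hS
  exact ((isCtrb_iff_linearIndependent_row M Q).1 h).ne_zero i (funext fun _ => hpow _ i hi _)

theorem isCtrb_iff_forall_invtSubmodule {M : Matrix ι ι K} {Q : Matrix ι κ K} :
    IsCtrb M Q ↔ ∀ W ∈ Module.End.invtSubmodule M.vecMulLinear,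
      W ≤ LinearMap.ker Q.vecMulLinear → W = ⊥ := by
  rw [isCtrb_iff_linearIndependent_row, ← vecMul_injective_iff, ← coe_vecMulLinear,
    ← LinearMap.ker_eq_bot]
  constructor
  · intro h W hW hWQ
    rw [eq_bot_iff, ← h]
    intro y hy
    rw [LinearMap.mem_ker, vecMulLinear_apply, vecMul_kalmanMatrix_eq_zero_iff]
    intro k
    induction k generalizing y with
    | zero => simpa using hWQ hy
    | succ k ih =>
      rw [pow_succ', Matrix.mul_assoc, ← vecMul_vecMul]
      exact ih (hW hy)
  · intro h
    refine h _ (fun y hy => ?_) fun y hy => ?_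
    all_goals
      rw [LinearMap.mem_ker, vecMulLinear_apply, vecMul_kalmanMatrix_eq_zero_iff] at hy
    · rw [Submodule.mem_comap, LinearMap.mem_ker, vecMulLinear_apply,
        vecMul_kalmanMatrix_eq_zero_iff]
      intro k
      rw [vecMulLinear_apply, vecMul_vecMul, ← Matrix.mul_assoc, ← pow_succ']
      exact hy (k + 1)
    · simpa using hy 0

end Kalman

section PBH

variable {ι κ o K : Type*} [Fintype ι] [Field K]

/-- The Popov–Belevitch–Hautus condition on `(M, Q)`: no nonzero left eigenvector of `M` is
annihilated by `Q`. Only eigenvalues in `K` itself are tested. -/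
def IsPBH (M : Matrix ι ι K) (Q : Matrix ι κ K) : Prop :=
  ∀ (μ : K) (y : ι → K), y ᵥ* M = μ • y → y ᵥ* Q = 0 → y = 0

theorem isCtrb_iff_isPBH [IsAlgClosed K] [Fintype κ] [DecidableEq ι] {M : Matrix ι ι K}
    {Q : Matrix ι κ K} : IsCtrb M Q ↔ IsPBH M Q := by
  rw [isCtrb_iff_forall_invtSubmodule]
  constructor
  · intro h μ y hy hyQ
    have hspan := h (K ∙ y)
      (by
        rw [Module.End.mem_invtSubmodule, Submodule.span_singleton_le_iff_mem,
          Submodule.mem_comap, vecMulLinear_apply, hy]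
        exact Submodule.smul_mem _ _ (Submodule.mem_span_singleton_self y))
      (by rwa [Submodule.span_singleton_le_iff_mem])
    exact Submodule.span_singleton_eq_bot.1 hspan
  · intro h W hW hWQ
    by_contra hne
    have : Nontrivial W := Submodule.nontrivial_iff_ne_bot.2 hne
    obtain ⟨μ, hμ⟩ := Module.End.exists_eigenvalue (M.vecMulLinear.restrict hW)
    obtain ⟨z, hz⟩ := hμ.exists_hasEigenvector
    exact hz.2 (Subtype.ext (h μ z (congrArg Subtype.val hz.apply_eq_smul) (hWQ z.2)))

theorem isCtrb_iff_isPBH_map (L : Type*) [Field L] [IsAlgClosed L] [Algebra K L] [Fintype κ]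
    [DecidableEq ι] {M : Matrix ι ι K} {Q : Matrix ι κ K} :
    IsCtrb M Q ↔ IsPBH (M.map (algebraMap K L)) (Q.map (algebraMap K L)) := by
  rw [← isCtrb_iff_isPBH, isCtrb_map_algebraMap_iff]

namespace IsPBH

theorem eq_zero_of_mul_eq_smul {M : Matrix ι ι K} {Q : Matrix ι κ K} (h : IsPBH M Q) {μ : K}
    {Y : Matrix o ι K} (hM : Y * M = μ • Y) (hQ : Y * Q = 0) : Y = 0 :=
  funext fun i => h μ (Y i) (congrFun hM i) (congrFun hQ i)

theorem card_le_rank_add_card [DecidableEq ι] [Fintype κ] {M : Matrix ι ι K} {Q : Matrix ι κ K}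
    (h : IsPBH M Q) (μ : K) :
    Fintype.card ι ≤ (M - μ • (1 : Matrix ι ι K)).rank + Fintype.card κ := by
  set T := M - μ • (1 : Matrix ι ι K) with hT
  have hrange : Module.finrank K (LinearMap.range T.vecMulLinear) = T.rank := by
    rw [← rank_transpose, Matrix.rank, mulVecLin_transpose]
  have hker : Module.finrank K (LinearMap.ker T.vecMulLinear) ≤ Fintype.card κ := by
    rw [← Module.finrank_fintype_fun_eq_card K]
    refine LinearMap.finrank_le_finrank_of_injective
      (f := Q.vecMulLinear.domRestrict (LinearMap.ker T.vecMulLinear)) ?_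
    refine (injective_iff_map_eq_zero _).2 fun ⟨y, hyT⟩ hyQ => Subtype.ext (h μ y ?_ hyQ)
    rwa [LinearMap.mem_ker, vecMulLinear_apply, hT, vecMul_sub, vecMul_smul, vecMul_one,
      sub_eq_zero] at hyT
  rw [← Module.finrank_fintype_fun_eq_card K (η := ι),
    ← T.vecMulLinear.finrank_range_add_finrank_ker, hrange]
  gcongr

theorem rank_le_card_of_mul_eq_smul [Fintype κ] [Fintype o] {M : Matrix ι ι K} {Q : Matrix ι κ K}
    (h : IsPBH M Q) {μ : K} {V : Matrix ι o K} (hV : M * V = μ • V) :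
    V.rank ≤ Fintype.card κ := by
  classical
  have hTV : (M - μ • (1 : Matrix ι ι K)) * V = 0 := by
    rw [Matrix.sub_mul, hV, smul_mul, Matrix.one_mul, sub_self]
  have hrank := rank_add_rank_le_card_of_mul_eq_zero hTV
  have hcard := h.card_le_rank_add_card μ
  omega

/-- At an eigenvalue of `F` the pairing of the equation with a left eigenvector kills `Z`; away from
the spectrum `X = (F - μ)⁻¹ h Z`. -/
theorem eq_zero_or_exists_mul_eq_smul {F : Matrix ι ι K} {h : Matrix ι (Fin 1) K}
    (hF : IsPBH F h) (k : Matrix (Fin 1) ι K) {μ : K} {X : Matrix ι o K} {Z : Matrix (Fin 1) o K}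
    (hX : F * X = μ • X + h * Z) : Z = 0 ∨ ∃ g : K, k * X = g • Z := by
  classical
  set T := F - μ • (1 : Matrix ι ι K) with hT
  have hTX : T * X = h * Z := by
    rw [hT, Matrix.sub_mul, hX, smul_mul, Matrix.one_mul, add_sub_cancel_left]
  by_cases hdet : T.det = 0
  · left
    obtain ⟨v, hv0, hv⟩ := exists_vecMul_eq_zero_iff.2 hdet
    have hvF : v ᵥ* F = μ • v := by
      rwa [hT, vecMul_sub, vecMul_smul, vecMul_one, sub_eq_zero] at hv
    have hvh : (v ᵥ* h) 0 ≠ 0 := fun h0 =>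
      hv0 (hF μ v hvF (funext fun q => by rwa [Subsingleton.elim q 0]))
    have hvZ : v ᵥ* h ᵥ* Z = 0 := by
      rw [vecMul_vecMul, ← hTX, ← vecMul_vecMul, hv, zero_vecMul]
    ext q j
    have hprod : (v ᵥ* h) 0 * Z 0 j = 0 := by
      simpa [vecMul, dotProduct] using congrFun hvZ j
    rw [Subsingleton.elim q 0]
    exact (mul_eq_zero.1 hprod).resolve_left hvh
  · right
    have hXZ : X = T⁻¹ * (h * Z) := by
      rw [← hTX, nonsing_inv_mul_cancel_left _ _ (isUnit_iff_ne_zero.2 hdet)]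
    refine ⟨(k * T⁻¹ * h) 0 0, ?_⟩
    rw [hXZ, ← Matrix.mul_assoc, ← Matrix.mul_assoc]
    ext q j
    rw [Subsingleton.elim q 0]
    simp [mul_apply (M := k * T⁻¹ * h)]

end IsPBH

end PBH

section Network

variable {ι ν κ l K : Type*}

theorem kronecker_map {R S : Type*} [CommRing R] [CommRing S] (f : R →+* S)
    (D : Matrix ι κ R) (b : Matrix ν l R) : (D ⊗ₖ b).map f = D.map f ⊗ₖ b.map f := by
  ext
  simp

variable [DecidableEq ι] [Fintype l]

/-- The state matrix of identical subsystems `(A, b, c)` coupled through the Laplacian `L`. -/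
abbrev networkMatrix {R : Type*} [CommRing R] (A : Matrix ν ν R) (b : Matrix ν l R)
    (c : Matrix l ν R) (L : Matrix ι ι R) : Matrix (ι × ν) (ι × ν) R :=
  (1 : Matrix ι ι R) ⊗ₖ A - L ⊗ₖ (b * c)

theorem networkMatrix_map {R S : Type*} [CommRing R] [CommRing S] (f : R →+* S)
    (A : Matrix ν ν R) (b : Matrix ν l R) (c : Matrix l ν R) (L : Matrix ι ι R) :
    (networkMatrix A b c L).map f = networkMatrix (A.map f) (b.map f) (c.map f) (L.map f) := by
  ext ⟨i, r⟩ ⟨j, s⟩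
  by_cases hij : i = j <;> simp [Matrix.mul_apply, hij]

variable [Fintype ι] [Fintype ν] [Field K] {A : Matrix ν ν K} {D : Matrix ι κ K} {L : Matrix ι ι K}

theorem isPBH_networkMatrix_iff {b : Matrix ν l K} {c : Matrix l ν K} :
    IsPBH (networkMatrix A b c L) (D ⊗ₖ b) ↔
      ∀ (μ : K) (X : Matrix ν ι K),
        Aᵀ * X = μ • X + cᵀ * (bᵀ * X * L) → bᵀ * X * D = 0 → X = 0 := by
  refine forall_congr' fun μ => ?_
  rw [vec_bijective.surjective.forall]
  simp only [networkMatrix, vecMul_sub, vec_vecMul_kronecker, ← vec_sub, ← vec_smul, vec_inj,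
    vec_eq_zero_iff, sub_eq_iff_eq_add, transpose_mul, Matrix.mul_one, Matrix.mul_assoc]

theorem isPBH_networkMatrix {b : Matrix ν (Fin 1) K} {c : Matrix (Fin 1) ν K} (hAb : IsPBH A b)
    (hAc : IsPBH Aᵀ cᵀ) (hL : IsPBH L D) : IsPBH (networkMatrix A b c L) (D ⊗ₖ b) := by
  rw [isPBH_networkMatrix_iff]
  intro μ X hX hD
  have hbX : bᵀ * X = 0 := by
    rcases hAc.eq_zero_or_exists_mul_eq_smul bᵀ hX with hZ | ⟨g, hg⟩
    · exact hL.eq_zero_of_mul_eq_smul (μ := 0) (by rw [hZ, zero_smul]) hD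
    · by_cases hg0 : g = 0
      · rw [hg, hg0, zero_smul]
      · exact hL.eq_zero_of_mul_eq_smul ((eq_inv_smul_iff₀ hg0).2 hg.symm) hD
  have hXA : Xᵀ * A = μ • Xᵀ := by
    rw [← transpose_inj, transpose_mul, transpose_transpose, hX, hbX]
    simp
  have hXb : Xᵀ * b = 0 := by
    rw [← transpose_inj, transpose_mul, transpose_transpose, hbX, transpose_zero]
  exact transpose_eq_zero.1 (hAb.eq_zero_of_mul_eq_smul hXA hXb)

namespace IsPBH

theorem of_networkMatrix_left [Nonempty ι] {b : Matrix ν l K} {c : Matrix l ν K}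
    (h : IsPBH (networkMatrix A b c L) (D ⊗ₖ b)) : IsPBH A b := by
  rw [isPBH_networkMatrix_iff] at h
  intro μ y hy hyb
  have hbX : bᵀ * vecMulVec y (1 : ι → K) = 0 := by
    rw [mul_vecMulVec, mulVec_transpose, hyb, zero_vecMulVec]
  have hX : vecMulVec y (1 : ι → K) = 0 := by
    refine h μ _ ?_ ?_
    · rw [hbX, mul_vecMulVec, mulVec_transpose, hy, smul_vecMulVec]
      simp
    · rw [hbX, Matrix.zero_mul]
  ext r
  simpa [vecMulVec_apply] using congrFun₂ hX r (Classical.arbitrary ι)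

theorem of_networkMatrix_right [Fintype κ] {b : Matrix ν l K} {c : Matrix l ν K}
    (h : IsPBH (networkMatrix A b c L) (D ⊗ₖ b))
    (hcard : Fintype.card κ * Fintype.card l < Fintype.card ι) : IsPBH Aᵀ cᵀ := by
  classical
  intro μ v hv hcv
  rw [vecMul_transpose] at hv hcv
  by_contra hv0
  obtain ⟨q, hq⟩ := Function.ne_iff.1 hv0
  let C : Matrix ν Unit K := replicateCol Unit v
  let V : Matrix (ι × ν) (ι × Unit) K := (1 : Matrix ι ι K) ⊗ₖ C
  have hV : networkMatrix A b c L * V = μ • V := by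
    have hAC : A * C = μ • C := by rw [← replicateCol_mulVec, hv, replicateCol_smul]
    have hcC : c * C = 0 := by rw [← replicateCol_mulVec, hcv, replicateCol_zero]
    rw [Matrix.sub_mul, ← mul_kronecker_mul, ← mul_kronecker_mul, Matrix.mul_assoc, hcC, hAC,
      Matrix.mul_zero, kronecker_zero, sub_zero, Matrix.one_mul, kronecker_smul]
  have hVleft : ((1 : Matrix ι ι K) ⊗ₖ replicateRow Unit (Pi.single q (v q)⁻¹)) * V = 1 := by
    rw [← mul_kronecker_mul, Matrix.one_mul, ← one_kronecker_one]
    congr 1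
    ext
    rw [one_apply_eq]
    exact (single_dotProduct _ _ _).trans (inv_mul_cancel₀ hq)
  have hrank : Fintype.card ι ≤ V.rank := by
    have hle := rank_mul_le_right ((1 : Matrix ι ι K) ⊗ₖ replicateRow Unit (Pi.single q (v q)⁻¹)) V
    simpa only [hVleft, rank_one, Fintype.card_prod, Fintype.card_unit, mul_one] using hle
  have hle := hrank.trans (h.rank_le_card_of_mul_eq_smul hV)
  rw [Fintype.card_prod] at hle
  omega

end IsPBH

end Network

section Forest

theorem exists_parent_depth {ι : Type*} {r : ι → ι → Prop} {S : Set ι}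
    (h : ∀ i, ∃ s ∈ S, Relation.ReflTransGen r s i) :
    ∃ (p : ι → ι) (d : ι → ℕ), ∀ i ∉ S, r (p i) i ∧ d i = d (p i) + 1 := by
  classical
  let level (m : ℕ) : Set ι := (SetRel.image {e | r e.1 e.2})^[m] S
  have mem_level_succ {m : ℕ} {i : ι} : i ∈ level (m + 1) ↔ ∃ j ∈ level m, r j i := by
    simp only [level, Function.iterate_succ_apply']
    rfl
  have hlevel : ∀ i, ∃ m, i ∈ level m := by
    intro i
    obtain ⟨s, hs, hsi⟩ := h i
    induction hsi with
    | refl => exact ⟨0, hs⟩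
    | tail _ hr ih =>
      obtain ⟨m, hm⟩ := ih
      exact ⟨m + 1, mem_level_succ.2 ⟨_, hm, hr⟩⟩
  let d (i : ι) : ℕ := Nat.find (hlevel i)
  have hd (i : ι) : i ∈ level (d i) := Nat.find_spec (hlevel i)
  have ne_zero_of_notMem {i : ι} (hi : i ∉ S) : d i ≠ 0 := fun h0 => by
    have hdi := hd i
    rw [h0] at hdi
    exact hi hdi
  have hparent : ∀ i, ∃ j, i ∉ S → r j i ∧ d i = d j + 1 := by
    intro i
    rcases hdi : d i with _ | m
    · exact ⟨i, fun hi => absurd hdi (ne_zero_of_notMem hi)⟩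
    · have hi := hd i
      rw [hdi] at hi
      obtain ⟨j, hj, hji⟩ := mem_level_succ.1 hi
      have hjm : d j ≤ m := Nat.find_min' (hlevel j) hj
      have hij : d i ≤ d j + 1 := Nat.find_min' (hlevel i) (mem_level_succ.2 ⟨j, hd j, hji⟩)
      exact ⟨j, fun _ => ⟨hji, by omega⟩⟩
  choose p hp using hparent
  exact ⟨p, d, hp⟩

variable {ι K : Type*} [Fintype ι] [DecidableEq ι] [Field K] {p : ι → ι} {d : ι → ℕ} {ω γ : ι → K}
  {μ : K}

theorem exists_iterate_parent_eq (hd : ∀ i, γ i ≠ 0 → d i = d (p i) + 1)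
    (hγ : ∀ j, (ω j - μ) * γ j = ∑ k with p k = j, ω k * γ k) {j : ι} (hj : γ j ≠ 0) :
    ∃ (i : ι) (m : ℕ), ω i = μ ∧ p^[m] i = j ∧ d i = d j + m := by
  induction hm : Finset.univ.sup d - d j using Nat.strong_induction_on generalizing j with
  | _ n ih =>
    by_cases hμ : ω j = μ
    · exact ⟨j, 0, hμ, rfl, rfl⟩
    have hsum : ∑ k with p k = j, ω k * γ k ≠ 0 :=
      hγ j ▸ mul_ne_zero (sub_ne_zero.2 hμ) hj
    obtain ⟨k, hkmem, hk⟩ := Finset.exists_ne_zero_of_sum_ne_zero hsum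
    have hkj : p k = j := (Finset.mem_filter.1 hkmem).2
    have hdk : d k = d j + 1 := hkj ▸ hd k (right_ne_zero_of_mul hk)
    have hsup : d k ≤ Finset.univ.sup d := Finset.le_sup (Finset.mem_univ k)
    obtain ⟨i, m, hi, hmi, hdi⟩ := ih _ (by omega) (right_ne_zero_of_mul hk) rfl
    refine ⟨i, m + 1, hi, ?_, by omega⟩
    rw [Function.iterate_succ_apply', hmi, hkj]

theorem eq_of_depth_eq (hd : ∀ i, γ i ≠ 0 → d i = d (p i) + 1) (hω : Function.Injective ω)
    (hγ : ∀ j, (ω j - μ) * γ j = ∑ k with p k = j, ω k * γ k) {j k : ι} (hj : γ j ≠ 0)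
    (hk : γ k ≠ 0) (hjk : d j = d k) : j = k := by
  obtain ⟨i, m, hi, rfl, hdj⟩ := exists_iterate_parent_eq hd hγ hj
  obtain ⟨i', m', hi', rfl, hdk⟩ := exists_iterate_parent_eq hd hγ hk
  obtain rfl : i = i' := hω (hi.trans hi'.symm)
  obtain rfl : m = m' := by omega
  rfl

theorem eq_zero_of_forest_eigenvector (hd : ∀ i, γ i ≠ 0 → d i = d (p i) + 1)
    (hω : Function.Injective ω) (hω0 : ∀ i, ω i ≠ 0)
    (hγ : ∀ j, (ω j - μ) * γ j = ∑ k with p k = j, ω k * γ k) : γ = 0 := by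
  classical
  by_contra hne
  obtain ⟨j, hj, hjmin⟩ : ∃ j, γ j ≠ 0 ∧ ∀ k, γ k ≠ 0 → d j ≤ d k := by
    obtain ⟨i, hi⟩ := Function.ne_iff.1 hne
    simpa using Finset.exists_min_image {i | γ i ≠ 0} d ⟨i, by simpa using hi⟩
  have hparent : γ (p j) = 0 := by
    by_contra h
    have := hd j hj
    have := hjmin (p j) h
    omega
  have hsum : ∑ k with p k = p j, ω k * γ k = ω j * γ j := by
    refine Finset.sum_eq_single_of_mem j (by simp) fun k hk hkj => ?_
    have hpk : p k = p j := (Finset.mem_filter.1 hk).2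
    by_cases hγk : γ k = 0
    · rw [hγk, mul_zero]
    · exact absurd (eq_of_depth_eq hd hω hγ hγk hj (by rw [hd k hγk, hd j hj, hpk])) hkj
  refine mul_ne_zero (hω0 j) hj ?_
  rw [← hsum, ← hγ, hparent, mul_zero]

end Forest

section Laplacian

variable {N : ℕ} {R : Type*} [CommRing R] {E : Finset (Fin N × Fin N)} {Iu : Finset (Fin N)}

theorem lapMat_map {S : Type*} [CommRing S] (f : R →+* S) (w : Fin N × Fin N → R) :
    (lapMat E w).map f = lapMat E (f ∘ w) := by
  ext i j
  simp [lapMat, apply_ite f]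

theorem deltaMat_map {S : Type*} [CommRing S] (f : R →+* S) :
    (deltaMat Iu : Matrix (Fin N) {i // i ∈ Iu} R).map f = deltaMat Iu := by
  ext i j
  simp [deltaMat, apply_ite f]

theorem vecMul_deltaMat (γ : Fin N → R) (i : {i // i ∈ Iu}) : (γ ᵥ* deltaMat Iu) i = γ i := by
  simp [vecMul, dotProduct, deltaMat]

/-- A self-loop contributes to both terms and cancels. -/
theorem lapMat_eq_diagonal_sub (w : Fin N × Fin N → R) :
    lapMat E w = diagonal (fun j => ∑ k with (k, j) ∈ E, w (k, j)) -
      of fun i j => if (j, i) ∈ E then w (j, i) else 0 := by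
  ext i j
  by_cases hij : i = j
  · subst hij
    rw [Matrix.sub_apply, diagonal_apply_eq, of_apply, eq_sub_iff_add_eq', Finset.sum_filter,
      ← Finset.add_sum_erase _ _ (Finset.mem_univ i), ← Finset.sum_filter]
    simp [lapMat, ← Finset.filter_ne', Finset.filter_filter]
  · by_cases hji : (j, i) ∈ E <;> simp [lapMat, hij, hji]

theorem vecMul_lapMat (w : Fin N × Fin N → R) (γ : Fin N → R) (j : Fin N) :
    (γ ᵥ* lapMat E w) j =
      (∑ k with (k, j) ∈ E, w (k, j)) * γ j - ∑ k with (j, k) ∈ E, w (j, k) * γ k := by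
  rw [lapMat_eq_diagonal_sub, vecMul_sub, Pi.sub_apply, vecMul_diagonal, mul_comm]
  simp [vecMul, dotProduct, Finset.sum_filter, mul_comm]

theorem isPBH_lapMat_forest {K : Type*} [Field K] {p : Fin N → Fin N} {d : Fin N → ℕ}
    (hp : ∀ i ∉ Iu, (p i, i) ∈ E ∧ d i = d (p i) + 1) {ω : Fin N → K}
    (hω : Function.Injective ω) (hω0 : ∀ i, ω i ≠ 0) :
    IsPBH (lapMat E fun e => if p e.2 = e.1 then ω e.2 else 0) (deltaMat Iu) := by
  intro μ γ hγ hroot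
  have hparent {i : Fin N} (hi : γ i ≠ 0) : (p i, i) ∈ E ∧ d i = d (p i) + 1 :=
    hp i fun hiu => hi (by simpa [vecMul_deltaMat] using congrFun hroot ⟨i, hiu⟩)
  refine eq_zero_of_forest_eigenvector (p := p) (d := d) (μ := μ)
    (fun i hi => (hparent hi).2) hω hω0 fun j => ?_
  have hdeg : (∑ k with (k, j) ∈ E, if p j = k then ω j else 0) * γ j = ω j * γ j := by
    by_cases hj : γ j = 0
    · rw [hj, mul_zero, mul_zero]
    · simp [(hparent hj).1]
  have hout : ∑ k with (j, k) ∈ E, (if p k = j then ω k else 0) * γ k =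
      ∑ k with p k = j, ω k * γ k := by
    rw [Finset.sum_filter, Finset.sum_filter]
    refine Finset.sum_congr rfl fun k _ => ?_
    by_cases hk : γ k = 0
    · simp [hk]
    · by_cases hkj : p k = j
      · simp [← hkj, (hparent hk).1]
      · simp [hkj]
  have hj := congrFun hγ j
  rw [vecMul_lapMat, hdeg, hout, Pi.smul_apply, smul_eq_mul] at hj
  rw [sub_mul, sub_eq_iff_eq_add', ← sub_eq_iff_eq_add, hj]

theorem exists_isPBH_map_lapMat {K : Type*} [Field K] [Infinite K] (L : Type*) [Field L]
    [Algebra K L] (h : ∀ i, inputReachable E Iu i) :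
    ∃ w : Fin N × Fin N → K, IsPBH ((lapMat E w).map (algebraMap K L)) (deltaMat Iu) := by
  obtain ⟨p, d, hp⟩ := exists_parent_depth (r := fun a b => (a, b) ∈ E) (S := Iu) h
  let u := (Set.finite_singleton (0 : K)).infinite_compl.natEmbedding
  let ω (i : Fin N) : K := u i
  have hω : Function.Injective ω :=
    Subtype.val_injective.comp (u.injective.comp Fin.val_injective)
  refine ⟨fun e => if p e.2 = e.1 then ω e.2 else 0, ?_⟩
  rw [lapMat_map]
  have hforest := isPBH_lapMat_forest hp ((algebraMap K L).injective.comp hω)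
    fun i => (map_ne_zero (algebraMap K L)).2 (u i).2
  simpa only [Function.comp_def, apply_ite (algebraMap K L), map_zero] using hforest

theorem inputReachable_of_isCtrb {K ν l : Type*} [Field K] [Fintype ν] [DecidableEq ν] [Nonempty ν]
    [Fintype l] {A B : Matrix ν ν K} {b : Matrix ν l K} {w : Fin N × Fin N → K}
    (h : IsCtrb ((1 : Matrix (Fin N) (Fin N) K) ⊗ₖ A - lapMat E w ⊗ₖ B) (deltaMat Iu ⊗ₖ b))
    (i : Fin N) : inputReachable E Iu i := by
  have huniv : {q : Fin N × ν | inputReachable E Iu q.1} = Set.univ := by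
    refine h.eq_univ_of_forall_apply_eq_zero ?_ ?_
    · rintro ⟨k, r⟩ hk ⟨j, q⟩ ⟨s, hs, hsj⟩
      have hkj : k ≠ j := by rintro rfl; exact hk ⟨s, hs, hsj⟩
      have hE : (j, k) ∉ E := fun hE => hk ⟨s, hs, hsj.tail hE⟩
      simp [lapMat, hkj, hE]
    · rintro ⟨k, r⟩ hk ⟨⟨s, hs⟩, q⟩
      have hks : k ≠ s := by rintro rfl; exact hk ⟨k, hs, .refl⟩
      simp [deltaMat, hks]
  exact huniv.ge (Set.mem_univ (i, Classical.arbitrary ν))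

end Laplacian

theorem stmt0_general {K ν : Type*} [Field K] [Infinite K] [Fintype ν] [DecidableEq ν] [Nonempty ν]
    {N : ℕ} (A : Matrix ν ν K) (b : Matrix ν (Fin 1) K) (c : Matrix (Fin 1) ν K)
    (E : Finset (Fin N × Fin N)) (Iu : Finset (Fin N)) (hIu : Iu.card < N) :
    (∃ w : Fin N × Fin N → K,
        IsCtrb (networkMatrix A b c (lapMat E w)) ((deltaMat Iu : Matrix _ _ K) ⊗ₖ b)) ↔
      ((IsCtrb A b ∧ IsObsv A c) ∧ ∀ i : Fin N, inputReachable E Iu i) := by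
  set f := algebraMap K (AlgebraicClosure K)
  have hnet (w : Fin N × Fin N → K) :
      IsCtrb (networkMatrix A b c (lapMat E w)) ((deltaMat Iu : Matrix _ _ K) ⊗ₖ b) ↔
        IsPBH (networkMatrix (A.map f) (b.map f) (c.map f) ((lapMat E w).map f))
          (deltaMat Iu ⊗ₖ b.map f) := by
    rw [isCtrb_iff_isPBH_map (AlgebraicClosure K), networkMatrix_map, kronecker_map, deltaMat_map]
  rw [IsObsv, isCtrb_iff_isPBH_map (AlgebraicClosure K), isCtrb_iff_isPBH_map (AlgebraicClosure K),
    transpose_map, transpose_map]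
  constructor
  · rintro ⟨w, hw⟩
    have : Nonempty (Fin N) := ⟨⟨0, by omega⟩⟩
    have hpbh := (hnet w).1 hw
    exact ⟨⟨hpbh.of_networkMatrix_left, hpbh.of_networkMatrix_right (by simpa using hIu)⟩,
      inputReachable_of_isCtrb hw⟩
  · rintro ⟨⟨hAb, hAc⟩, hreach⟩
    obtain ⟨w, hL⟩ := exists_isPBH_map_lapMat (K := K) (AlgebraicClosure K) hreach
    exact ⟨w, (hnet w).2 (isPBH_networkMatrix hAb hAc hL)⟩

/-- Theorem 1 of the paper. For a SISO networked relative coupling system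
with subsystem `(A, b, c)`, digraph `G_sys = ({1,…,N}, E)` without self-loops, and driving set
`I_u` with `|I_u| < N`: the system is structurally controllable (some weight vector makes
`(I_N ⊗ A - L(w) ⊗ (b c), Δ ⊗ b)` controllable) iff `(A, b)` is controllable, `(A, c)` is
observable, and the network is globally input-reachable. -/
theorem stmt0 {n N : ℕ} (hn : 1 ≤ n)
    (A : Matrix (Fin n) (Fin n) ℝ) (b : Matrix (Fin n) (Fin 1) ℝ) (c : Matrix (Fin 1) (Fin n) ℝ)
    (E : Finset (Fin N × Fin N)) (hE : ∀ e ∈ E, e.1 ≠ e.2)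
    (Iu : Finset (Fin N)) (hIu : Iu.card < N) :
    (∃ w : Fin N × Fin N → ℝ,
        IsCtrb ((1 : Matrix (Fin N) (Fin N) ℝ) ⊗ₖ A - lapMat E w ⊗ₖ (b * c))
          ((deltaMat Iu : Matrix (Fin N) {i // i ∈ Iu} ℝ) ⊗ₖ b)) ↔
      ((IsCtrb A b ∧ IsObsv A c) ∧ ∀ i : Fin N, inputReachable E Iu i) := by
  have : Nonempty (Fin n) := ⟨⟨0, hn⟩⟩
  exact stmt0_general A b c E Iu hIu
end
end

section
/- Let A ∈ ℝ^{n×n} and B ∈ ℝ^{n×r} with (A, B) controllable, and let c₀ ∈ ℝ^{1×n} with c₀ ≠ 0. Then the rational matrix function λ ↦ c₀ (λI − A)^{−1} B is not identically zero: there exists λ ∈ ℂ such that det(λI − A) ≠ 0 and c₀ (λI − A)^{−1} B ≠ 0 (where the real matrices A, B, c₀ are viewed as complex matrices). -/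
/-!
Let `s` be a set of at least `n` points outside the spectrum of `A` and `N = ∏_{w ∈ s} (X - w)`.
For `k < n`, expanding `Xᵏ / N` in partial fractions and evaluating at `A` shows that
`N(A)⁻¹ Aᵏ` is a linear combination of the resolvents `(wI - A)⁻¹`, `w ∈ s`. If
`C (wI - A)⁻¹ B` vanishes on `s`, then `C N(A)⁻¹` annihilates every `Aᵏ B` with `k < n`, so
controllability gives `C N(A)⁻¹ = 0`, and hence `C = 0`. An infinite field has enough such points.
Controllability means that the Kalman matrix has a right inverse, which survives the extension of
scalars from `ℝ` to `ℂ`.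
-/

open Matrix
open scoped Kronecker

noncomputable section

section PartialFractions

open Polynomial Lagrange
open scoped Ring

variable {k K R : Type*} [CommRing k] [Field K] [Ring R] [Algebra k R] [Algebra K R]

theorem isUnit_aeval_nodal {a : R} {s : Finset k} (hs : ↑s ⊆ resolventSet k a) :
    IsUnit (aeval a (nodal s id)) := by
  classical
  induction s using Finset.induction_on with
  | empty => simp only [nodal_empty, map_one, isUnit_one]
  | insert w t hw ih =>
    rw [Finset.coe_insert, Set.insert_subset_iff] at hs
    rw [nodal_insert_eq_nodal hw, map_mul]
    refine IsUnit.mul ?_ (ih hs.2)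
    rw [map_sub, aeval_X, aeval_C, IsUnit.sub_iff]
    exact hs.1

theorem aeval_nodal_mul_resolvent [DecidableEq k] {a : R} {s : Finset k} {w : k} (hws : w ∈ s)
    (hw : w ∈ resolventSet k a) :
    aeval a (nodal s id) * resolvent a w = -aeval a (nodal (s.erase w) id) := by
  have hfactor : aeval a (nodal s id) =
      -aeval a (nodal (s.erase w) id) * (algebraMap k R w - a) := by
    rw [nodal_eq_mul_nodal_erase hws, mul_comm, map_mul, map_sub, aeval_X, aeval_C, id,
      neg_mul, ← mul_neg, neg_sub]
  rw [hfactor, resolvent, Ring.mul_inverse_cancel_right _ _ hw]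

theorem eq_sum_C_mul_nodal_erase [DecidableEq K] {s : Finset K} {p : K[X]}
    (hp : p.degree < s.card) :
    p = ∑ w ∈ s, C (nodalWeight s id w * p.eval w) * nodal (s.erase w) id := by
  refine (eq_interpolate (v := id) Function.injective_id.injOn hp).trans ?_
  rw [interpolate_eq_nodalWeight_mul_nodal_div_X_sub_C]
  refine Finset.sum_congr rfl fun w hw => ?_
  rw [nodal_erase_eq_nodal_div hw, C_mul, mul_right_comm, id]

theorem inverse_aeval_nodal_mul_aeval_eq_neg_sum_resolvent [DecidableEq K] {a : R} {s : Finset K}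
    (hs : ↑s ⊆ resolventSet K a) {p : K[X]} (hp : p.degree < s.card) :
    (aeval a (nodal s id))⁻¹ʳ * aeval a p =
      -∑ w ∈ s, (nodalWeight s id w * p.eval w) • resolvent a w := by
  conv_lhs => rw [eq_sum_C_mul_nodal_erase hp]
  rw [map_sum, Finset.mul_sum, ← Finset.sum_neg_distrib]
  refine Finset.sum_congr rfl fun w hw => ?_
  have hresolvent :
      (aeval a (nodal s id))⁻¹ʳ * aeval a (nodal (s.erase w) id) = -resolvent a w := by
    rw [← neg_eq_iff_eq_neg.mpr (aeval_nodal_mul_resolvent hw (hs hw)), mul_neg,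
      Ring.inverse_mul_cancel_left _ _ (isUnit_aeval_nodal hs)]
  rw [map_mul, aeval_C, ← Algebra.smul_def, mul_smul_comm, hresolvent, smul_neg]

end PartialFractions

theorem rank_eq_card_iff_exists_mul_eq_one {K m n : Type*} [Field K] [Fintype m] [DecidableEq m]
    [Fintype n] {M : Matrix m n K} :
    M.rank = Fintype.card m ↔ ∃ N : Matrix n m K, M * N = 1 := by
  classical
  rw [← Matrix.mulVec_surjective_iff_exists_right_inverse, ← Matrix.coe_mulVecLin,
    ← LinearMap.range_eq_top, Matrix.rank, ← Module.finrank_fintype_fun_eq_card K]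
  exact ⟨Submodule.eq_top_of_finrank_eq, fun h => by rw [h, finrank_top]⟩

/-- The Kalman matrix `[Q, MQ, …, Mⁿ⁻¹Q]` of the pair `(M, Q)`, whose rank decides controllability.
The column indexed by `(k, j)` is the `j`-th column of `Mᵏ Q`. -/
def kalmanMat {R ι κ : Type*} [Semiring R] [Fintype ι] [DecidableEq ι]
    (M : Matrix ι ι R) (Q : Matrix ι κ R) : Matrix ι (Fin (Fintype.card ι) × κ) R :=
  Matrix.of fun i jk => (M ^ (jk.1 : ℕ) * Q) i jk.2

theorem kalmanMat_map {R S ι κ : Type*} [Semiring R] [Semiring S] [Fintype ι] [DecidableEq ι]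
    (M : Matrix ι ι R) (Q : Matrix ι κ R) (f : R →+* S) :
    kalmanMat (M.map f) (Q.map f) = (kalmanMat M Q).map f := by
  ext i jk
  simp only [kalmanMat, Matrix.of_apply, Matrix.map_apply, ← Matrix.map_pow, ← Matrix.map_mul]

theorem mul_kalmanMat_eq_zero_iff {R ι κ m : Type*} [Semiring R] [Fintype ι] [DecidableEq ι]
    {M : Matrix ι ι R} {Q : Matrix ι κ R} {C : Matrix m ι R} :
    C * kalmanMat M Q = 0 ↔ ∀ k < Fintype.card ι, C * (M ^ k * Q) = 0 := by
  refine ⟨fun h k hk => ?_, fun h => ?_⟩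
  · ext i j
    exact congrFun₂ h i (⟨k, hk⟩, j)
  · ext i jk
    exact congrFun₂ (h jk.1 jk.1.isLt) i jk.2

section Controllability

variable {K L ι κ m : Type*} [Field K] [Field L] [Fintype ι] [Fintype κ] [DecidableEq ι]
  {A : Matrix ι ι K} {B : Matrix ι κ K} {C : Matrix m ι K}

theorem isCtrb_iff_exists_kalmanMat_mul_eq_one :
    IsCtrb A B ↔ ∃ N : Matrix (Fin (Fintype.card ι) × κ) ι K, kalmanMat A B * N = 1 :=
  rank_eq_card_iff_exists_mul_eq_one

theorem IsCtrb.map (hAB : IsCtrb A B) (f : K →+* L) : IsCtrb (A.map f) (B.map f) := by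
  obtain ⟨N, hN⟩ := isCtrb_iff_exists_kalmanMat_mul_eq_one.mp hAB
  refine isCtrb_iff_exists_kalmanMat_mul_eq_one.mpr ⟨N.map f, ?_⟩
  rw [kalmanMat_map, ← Matrix.map_mul, hN, Matrix.map_one _ f.map_zero f.map_one]

theorem IsCtrb.eq_zero_of_forall_mul_pow_mul_eq_zero (hAB : IsCtrb A B)
    (hC : ∀ k < Fintype.card ι, C * (A ^ k * B) = 0) : C = 0 := by
  obtain ⟨N, hN⟩ := isCtrb_iff_exists_kalmanMat_mul_eq_one.mp hAB
  rw [← Matrix.mul_one C, ← hN, ← Matrix.mul_assoc, mul_kalmanMat_eq_zero_iff.mpr hC,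
    Matrix.zero_mul]

open Polynomial Lagrange Ring in
theorem IsCtrb.eq_zero_of_forall_mul_resolvent_mul_eq_zero (hAB : IsCtrb A B) {s : Finset K}
    (hcard : Fintype.card ι ≤ s.card) (hs : ↑s ⊆ resolventSet K A)
    (hC : ∀ w ∈ s, C * resolvent A w * B = 0) : C = 0 := by
  classical
  set N := aeval A (nodal s id)
  have hpow : ∀ k < Fintype.card ι, C * N⁻¹ʳ * (A ^ k * B) = 0 := by
    intro k hk
    have hdegree : (X ^ k : K[X]).degree < s.card := by
      rw [degree_X_pow]
      exact_mod_cast hk.trans_le hcard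
    have hexpand := inverse_aeval_nodal_mul_aeval_eq_neg_sum_resolvent hs hdegree
    rw [map_pow, aeval_X] at hexpand
    rw [← Matrix.mul_assoc, Matrix.mul_assoc C, hexpand, Matrix.mul_neg, Matrix.neg_mul,
      neg_eq_zero, Matrix.mul_sum, Matrix.sum_mul]
    refine Finset.sum_eq_zero fun w hw => ?_
    rw [Matrix.mul_smul, Matrix.smul_mul, hC w hw, smul_zero]
  have hzero : C * N⁻¹ʳ = 0 := hAB.eq_zero_of_forall_mul_pow_mul_eq_zero hpow
  rw [← Matrix.mul_one C, ← Ring.inverse_mul_cancel N (isUnit_aeval_nodal hs), ← Matrix.mul_assoc,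
    hzero, Matrix.zero_mul]

theorem stmt1_general [Infinite K] (hAB : IsCtrb A B) (hC : C ≠ 0) :
    ∃ z : K, (z • (1 : Matrix ι ι K) - A).det ≠ 0 ∧
      C * (z • (1 : Matrix ι ι K) - A)⁻¹ * B ≠ 0 := by
  obtain ⟨s, hs, hcard⟩ :=
    A.finite_spectrum.infinite_compl.exists_subset_card_eq (Fintype.card ι)
  rw [spectrum, compl_compl] at hs
  obtain ⟨z, hz, hne⟩ : ∃ z ∈ s, C * resolvent A z * B ≠ 0 := by
    by_contra! hzero
    exact hC (hAB.eq_zero_of_forall_mul_resolvent_mul_eq_zero hcard.ge hs hzero)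
  refine ⟨z, ?_, ?_⟩ <;> rw [← Algebra.algebraMap_eq_smul_one]
  · exact ((Matrix.isUnit_iff_isUnit_det _).mp (hs hz)).ne_zero
  · rwa [Matrix.nonsing_inv_eq_ringInverse]

end Controllability

/-- Lemma 2 of the paper. If `(A, B)` is controllable and `c₀ ≠ 0`, then the
rational matrix function `λ ↦ c₀ (λI - A)⁻¹ B` is not identically zero. -/
theorem stmt1 {n r : ℕ} (A : Matrix (Fin n) (Fin n) ℝ) (B : Matrix (Fin n) (Fin r) ℝ)
    (c0 : Matrix (Fin 1) (Fin n) ℝ) (hAB : IsCtrb A B) (hc0 : c0 ≠ 0) :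
    ∃ z : ℂ,
      (z • (1 : Matrix (Fin n) (Fin n) ℂ) - A.map (fun a => (a : ℂ))).det ≠ 0 ∧
      c0.map (fun a => (a : ℂ)) * (z • (1 : Matrix (Fin n) (Fin n) ℂ) - A.map (fun a => (a : ℂ)))⁻¹
          * B.map (fun a => (a : ℂ)) ≠ 0 :=
  stmt1_general (hAB.map Complex.ofRealHom) fun h =>
    hc0 (Matrix.map_injective Complex.ofReal_injective (h.trans (by simp)))
end
end

section
/- Let H ∈ ℝ^{k×n}, P ∈ ℝ^{k×m}, and G ∈ ℝ^{n×k} satisfy the no-cancellation conditions: for all i, j, if there exists l with G_{il} ≠ 0 and H_{lj} ≠ 0 then (GH)_{ij} ≠ 0, and for all i, j, if there exists l with G_{il} ≠ 0 and P_{lj} ≠ 0 then (GP)_{ij} ≠ 0. Define a digraph D₁ with vertex set {v₁,…,v_n} ∪ {z₁,…,z_m} and edges v_i → v_j iff (GH)_{ji} ≠ 0 and z_i → v_j iff (GP)_{ji} ≠ 0. Define a digraph D₂ with vertex set {v′₁,…,v′_k} ∪ {z₁,…,z_m} and edges v′_i → v′_j iff there exists l with H_{jl} ≠ 0 and G_{li}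 ≠ 0 (this is the generic zero–nonzero pattern of HΛG for a diagonal matrix Λ with free diagonal parameters), and z_i → v′_j iff P_{ji} ≠ 0. Then every cycle of D₁ is input-reachable if and only if every cycle of D₂ is input-reachable. -/
open Matrix
open scoped Kronecker

noncomputable section

/-!
Write `g` and `h` for the edges drawn by the nonzero entries of `G` and `H`. Without cancellation,
the state edges of the two digraphs are the composites of `g` and `h` in the two orders, and the
input edges of the first digraph are those of the second followed by `g`. By the sliding rule
`g (hg)* = (gh)* g` of Kleene algebra, the input-reachable vertices of the first digraph are then
the `g`-successors of those of the second. Every vertex on a cycle has its predecessor along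
`g` or `h` on a cycle of the other digraph, and input-reachability passes from that predecessor to
the vertex.
-/

section Relation

open Relation

variable {α β γ : Type*} {g : β → α → Prop} {h : α → β → Prop} {p : γ → β → Prop}

theorem comp_reflTransGen_comp (g : β → α → Prop) (h : α → β → Prop) :
    Comp g (ReflTransGen (Comp h g)) = Comp (ReflTransGen (Comp g h)) g := by
  ext b a
  constructor
  · rintro ⟨a₀, hba₀, walk⟩
    induction walk with
    | refl => exact ⟨b, .refl, hba₀⟩
    | tail _ step ih =>
      obtain ⟨b₁, hab₁, hba₁⟩ := step
      obtain ⟨b₀, walk₀, hb₀⟩ := ih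
      exact ⟨b₁, walk₀.tail ⟨_, hb₀, hab₁⟩, hba₁⟩
  · rintro ⟨b₀, walk, hb₀a⟩
    induction walk using ReflTransGen.head_induction_on with
    | refl => exact ⟨a, hb₀a, .refl⟩
    | head step _ ih =>
      obtain ⟨a₁, hba₁, hab₁⟩ := step
      obtain ⟨a₂, hba₂, walk₂⟩ := ih
      exact ⟨a₁, hba₁, walk₂.head ⟨_, hab₁, hba₂⟩⟩

theorem exists_transGen_comp_swap {a : α} (cycle : TransGen (Comp h g) a a) :
    ∃ b, g b a ∧ TransGen (Comp g h) b b := by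
  obtain ⟨a', walk, b, ha'b, hba⟩ := TransGen.tail'_iff.1 cycle
  obtain ⟨b', walk', hb'a'⟩ : Comp (ReflTransGen (Comp g h)) g b a' :=
    comp_reflTransGen_comp g h ▸ ⟨a, hba, walk⟩
  exact ⟨b, hba, .tail' walk' ⟨a', hb'a', ha'b⟩⟩

/-- Input-reachability of the state vertex `v` in the digraph with state edges `r` and edges `p`
from input vertices to state vertices. -/
def ReachableFrom (p : γ → α → Prop) (r : α → α → Prop) (v : α) : Prop :=
  ∃ z, Comp p (ReflTransGen r) z v

/-- Input-reachability of all cycles of the digraph with state edges `r` and input edges `p`.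
Cycles are closed walks, so it is enough to quantify over the vertices lying on one. -/
def CyclesReachableFrom (p : γ → α → Prop) (r : α → α → Prop) : Prop :=
  ∀ v, TransGen r v v → ReachableFrom p r v

theorem ReachableFrom.tail {p : γ → α → Prop} {r : α → α → Prop} {v w : α}
    (hv : ReachableFrom p r v) (hvw : r v w) : ReachableFrom p r w := by
  obtain ⟨z, a, hza, walk⟩ := hv
  exact ⟨z, a, hza, walk.tail hvw⟩

theorem reachableFrom_comp_iff {a : α} :
    ReachableFrom (Comp p g) (Comp h g) a ↔ ∃ b, ReachableFrom p (Comp g h) b ∧ g b a := by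
  have slide : Comp (Comp p g) (ReflTransGen (Comp h g)) =
      Comp (Comp p (ReflTransGen (Comp g h))) g := by
    rw [comp_assoc, comp_reflTransGen_comp, ← comp_assoc]
  unfold ReachableFrom
  rw [slide]
  exact ⟨fun ⟨z, b, hzb, hba⟩ => ⟨b, ⟨z, hzb⟩, hba⟩, fun ⟨b, ⟨z, hzb⟩, hba⟩ => ⟨z, b, hzb, hba⟩⟩

theorem cyclesReachableFrom_comp_iff :
    CyclesReachableFrom (Comp p g) (Comp h g) ↔ CyclesReachableFrom p (Comp g h) := by
  constructor
  · intro reachable b cycle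
    obtain ⟨a, hab, cycle'⟩ := exists_transGen_comp_swap cycle
    obtain ⟨b', hb', hb'a⟩ := reachableFrom_comp_iff.1 (reachable a cycle')
    exact hb'.tail ⟨a, hb'a, hab⟩
  · intro reachable a cycle
    obtain ⟨b, hba, cycle'⟩ := exists_transGen_comp_swap cycle
    exact reachableFrom_comp_iff.2 ⟨b, reachable b cycle', hba⟩

end Relation

section ZeroPattern

variable {R ι κ μ : Type*}

/-- The edges `j → i` of the digraph of a matrix: columns are sources and rows are targets. -/
def EntryEdge [Zero R] (A : Matrix ι κ R) (j : κ) (i : ι) : Prop :=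
  A i j ≠ 0

/-- The edges `j → i` of the generic digraph of `A * Λ * B`, where `Λ` is a diagonal matrix of free
parameters. It is encoded by the zero patterns of `A` and `B`, which determine that of
`A * Λ * B` when `R` has no zero divisors. -/
def GenericEdge [Zero R] (A : Matrix ι κ R) (B : Matrix κ μ R) (j : μ) (i : ι) : Prop :=
  ∃ l, A i l ≠ 0 ∧ B l j ≠ 0

/-- The no-cancellation condition on `A * B`: an entry of the product whose defining sum has a
term with both factors nonzero is itself nonzero. -/
def NoCancellation [NonUnitalNonAssocSemiring R] [Fintype κ]
    (A : Matrix ι κ R) (B : Matrix κ μ R) : Prop :=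
  ∀ i j, (∃ l, A i l ≠ 0 ∧ B l j ≠ 0) → (A * B) i j ≠ 0

theorem genericEdge_eq_comp [Zero R] (A : Matrix ι κ R) (B : Matrix κ μ R) :
    GenericEdge A B = Relation.Comp (EntryEdge B) (EntryEdge A) := by
  ext j i
  exact exists_congr fun _ => and_comm

theorem exists_ne_zero_of_mul_apply_ne_zero [NonUnitalNonAssocSemiring R] [Fintype κ]
    {A : Matrix ι κ R} {B : Matrix κ μ R} {i : ι} {j : μ} (hij : (A * B) i j ≠ 0) :
    ∃ l, A i l ≠ 0 ∧ B l j ≠ 0 := by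
  rw [Matrix.mul_apply] at hij
  obtain ⟨l, -, hl⟩ := Finset.exists_ne_zero_of_sum_ne_zero hij
  exact ⟨l, left_ne_zero_of_mul hl, right_ne_zero_of_mul hl⟩

theorem NoCancellation.entryEdge_mul [NonUnitalNonAssocSemiring R] [Fintype κ]
    {A : Matrix ι κ R} {B : Matrix κ μ R} (hAB : NoCancellation A B) :
    EntryEdge (A * B) = Relation.Comp (EntryEdge B) (EntryEdge A) := by
  rw [← genericEdge_eq_comp]
  ext j i
  exact ⟨exists_ne_zero_of_mul_apply_ne_zero, hAB i j⟩

theorem stmt10_general [NonUnitalNonAssocSemiring R] [Fintype κ]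
    {H : Matrix κ ι R} {P : Matrix κ μ R} {G : Matrix ι κ R}
    (hGH : NoCancellation G H) (hGP : NoCancellation G P) :
    CyclesReachableFrom (EntryEdge (G * P)) (EntryEdge (G * H)) ↔
      CyclesReachableFrom (EntryEdge P) (GenericEdge H G) := by
  rw [hGH.entryEdge_mul, hGP.entryEdge_mul, genericEdge_eq_comp]
  exact cyclesReachableFrom_comp_iff

end ZeroPattern

/-- Lemma 4 of the paper. Under the no-cancellation conditions on `G`, `H`,
`P`, every cycle of the auxiliary graph of `(GH, GP)` is input-reachable iff every cycle of the
auxiliary graph of `(HΛG, P)` (for generic diagonal `Λ`) is input-reachable. A vertex lies on a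
cycle iff it can reach itself by a nonempty directed walk, and a cycle is input-reachable iff
every vertex of it is. -/
theorem stmt10 {k n m : ℕ}
    (H : Matrix (Fin k) (Fin n) ℝ) (P : Matrix (Fin k) (Fin m) ℝ) (G : Matrix (Fin n) (Fin k) ℝ)
    (hGH : ∀ (i : Fin n) (j : Fin n), (∃ l : Fin k, G i l ≠ 0 ∧ H l j ≠ 0) → (G * H) i j ≠ 0)
    (hGP : ∀ (i : Fin n) (j : Fin m), (∃ l : Fin k, G i l ≠ 0 ∧ P l j ≠ 0) → (G * P) i j ≠ 0) :
    ((∀ v : Fin n, Relation.TransGen (fun a b : Fin n => (G * H) b a ≠ 0) v v →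
        ∃ (z : Fin m) (a : Fin n), (G * P) a z ≠ 0 ∧
          Relation.ReflTransGen (fun a b : Fin n => (G * H) b a ≠ 0) a v) ↔
      (∀ v : Fin k, Relation.TransGen (fun a b : Fin k => ∃ l : Fin n, H b l ≠ 0 ∧ G l a ≠ 0) v v →
        ∃ (z : Fin m) (a : Fin k), P a z ≠ 0 ∧
          Relation.ReflTransGen
            (fun a b : Fin k => ∃ l : Fin n, H b l ≠ 0 ∧ G l a ≠ 0) a v)) :=
  stmt10_general hGH hGP
end
end

section
/- Let A ∈ ℂ^{n×n}, B ∈ ℂ^{n×r}, C ∈ ℂ^{r×n}, and L ∈ ℂ^{N×N}, and let λ₁,…,λ_N be the eigenvalues of L listed with algebraic multiplicity (the roots of the characteristic polynomial of L). Then the characteristic polynomial of I_N ⊗ A − L ⊗ (BC) factors as det(s·I_{nN} − I_N ⊗ A + L ⊗ (BC)) = ∏_{i=1}^{N} det(s·I_n − A + λ_i·BC) in ℂ[s]. -/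
open Matrix
open scoped Kronecker

noncomputable section

/-!
For fixed `L`, the blocks of `1 ⊗ P + L ⊗ Q` are polynomials in `L`, so they commute and the
determinant can be taken in two stages: it is `det (p(L))`, where `p = det (P + X Q)`. Now
`det (p(L))` is the resultant of the characteristic polynomial of `L` and `p`: both are compatible
with ring homomorphisms, so it is enough to compare them over a field where `p` splits, and there
both are products over the roots of `p`. When the characteristic polynomial of `L` is `∏ (X - μ)`,
the resultant is also `∏ p(μ)`. The theorem is the case `P = s - A`, `Q = BC`, over the ring of
polynomials in `s`.
-/

section

open Polynomial

variable {R : Type*} [CommRing R]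

theorem resultant_multiset_prod_X_sub_C_left (s : Multiset R) (p : R[X]) :
    resultant (s.map fun μ => X - C μ).prod p s.card = (s.map p.eval).prod := by
  nontriviality R
  induction s using Multiset.induction_on with
  | empty => simp
  | cons μ s ih =>
    have hmul := resultant_mul_left (X - C μ) (s.map fun ν => X - C ν).prod p p.natDegree le_rfl
    rw [natDegree_X_sub_C, natDegree_multiset_prod_X_sub_C_eq_card, ih,
      resultant_X_sub_C_left _ _ _ le_rfl] at hmul
    rwa [Multiset.map_cons, Multiset.prod_cons, Multiset.card_cons, Multiset.map_cons,
      Multiset.prod_cons, add_comm s.card]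

variable {m n : Type*} [Fintype m] [DecidableEq m] [Fintype n] [DecidableEq n]

theorem det_aeval_X_sub_C (M : Matrix m m R) (a : R) :
    (aeval M (X - C a)).det = (-1) ^ Fintype.card m * M.charpoly.eval a := by
  have hneg : aeval M (X - C a) = -(scalar m a - M) := by
    rw [map_sub, aeval_X, aeval_C, neg_sub]
    rfl
  rw [hneg, det_neg, eval_charpoly]

theorem det_aeval_eq_resultant_charpoly_of_splits [IsDomain R] (M : Matrix m m R) {p : R[X]}
    (hp : p.Splits) : (aeval M p).det = resultant M.charpoly p (Fintype.card m) := by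
  let detAeval : R[X] →* R := detMonoidHom.comp (aeval M).toRingHom.toMonoidHom
  have hC (c : R) : detAeval (C c) = c ^ Fintype.card m := by
    simp [detAeval, Algebra.algebraMap_eq_smul_one]
  have hX (a : R) : detAeval (X - C a) = (-1) ^ Fintype.card m * M.charpoly.eval a :=
    det_aeval_X_sub_C M a
  calc (aeval M p).det
      = detAeval (C p.leadingCoeff * (p.roots.map fun a => X - C a).prod) :=
        congrArg detAeval hp.eq_prod_roots
    _ = p.leadingCoeff ^ Fintype.card m *
          (((-1) ^ Fintype.card m) ^ p.natDegree * (p.roots.map M.charpoly.eval).prod) := by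
        rw [map_mul, hC, map_multiset_prod, Multiset.map_map]
        simp only [Function.comp_apply, hX, Multiset.prod_map_mul, Multiset.map_const',
          Multiset.prod_replicate, hp.natDegree_eq_card_roots]
    _ = resultant M.charpoly p (Fintype.card m) := by
        rw [resultant_comm, resultant_eq_prod_eval p _ _ M.charpoly_natDegree_eq_dim.le hp]
        ring

theorem det_aeval_map {S : Type*} [CommRing S] (f : R →+* S) (M : Matrix m m R) (p : R[X]) :
    (aeval (M.map f) (p.map f)).det = f (aeval M p).det := by
  have hcomm : (algebraMap S (Matrix m m S)).comp f = f.mapMatrix.comp (algebraMap R _) := by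
    ext1 a
    simp [algebraMap_eq_diagonal, Pi.algebraMap_def, diagonal_map]
  rw [RingHom.map_det, map_aeval_eq_aeval_map hcomm, RingHom.mapMatrix_apply]

theorem det_aeval_eq_resultant_charpoly (M : Matrix m m R) (p : R[X]) :
    (aeval M p).det = resultant M.charpoly p (Fintype.card m) := by
  induction p using induction_of_Splits_of_injective_of_surjective with
  | Splits K p hp => exact det_aeval_eq_resultant_charpoly_of_splits M hp
  | injective R S φ hφ p ih =>
    apply hφ
    rw [← det_aeval_map, ih, charpoly_map, resultant_map_map, natDegree_map_eq_of_injective hφ]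
  | surjective R S φ hφ p ih =>
    obtain ⟨q, rfl, hdeg⟩ := exists_degree_eq_of_mem_lifts (Polynomial.map_surjective φ hφ p)
    obtain ⟨N, rfl⟩ : ∃ N : Matrix m m R, N.map φ = M :=
      ⟨M.map (Function.surjInv hφ), ext fun i j => Function.surjInv_eq hφ (M i j)⟩
    rw [det_aeval_map, ih, charpoly_map, resultant_map_map, natDegree_eq_natDegree hdeg]

theorem det_aeval_eq_prod_of_charpoly_eq_prod (M : Matrix m m R) {s : Multiset R}
    (hs : M.charpoly = (s.map fun μ => X - C μ).prod) (p : R[X]) :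
    (aeval M p).det = (s.map p.eval).prod := by
  nontriviality R
  have hcard : Fintype.card m = s.card := by
    rw [← M.charpoly_natDegree_eq_dim, hs, natDegree_multiset_prod_X_sub_C_eq_card]
  rw [det_aeval_eq_resultant_charpoly, hs, hcard, resultant_multiset_prod_X_sub_C_left]

theorem det_one_kronecker_add_kronecker (M : Matrix m m R) (P Q : Matrix n n R) :
    ((1 : Matrix m m R) ⊗ₖ P + M ⊗ₖ Q).det =
      (aeval M (P.map C + (X : R[X]) • Q.map C).det).det := by
  have hcomp : ((P.map C + (X : R[X]) • Q.map C).map (aeval M).toRingHom).comp n n m m R =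
      ((1 : Matrix m m R) ⊗ₖ P + M ⊗ₖ Q).submatrix (Equiv.prodComm n m) (Equiv.prodComm n m) := by
    ext ⟨i, k⟩ ⟨j, l⟩
    simp [Matrix.comp_apply, Matrix.one_apply, Algebra.algebraMap_eq_smul_one, mul_comm (M k l)]
  rw [← det_submatrix_equiv_self (Equiv.prodComm n m), ← hcomp]
  exact (det_det (P.map C + (X : R[X]) • Q.map C) (aeval M).toRingHom).symm

theorem det_one_kronecker_add_kronecker_of_charpoly_eq_prod (M : Matrix m m R) {s : Multiset R}
    (hs : M.charpoly = (s.map fun μ => X - C μ).prod) (P Q : Matrix n n R) :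
    ((1 : Matrix m m R) ⊗ₖ P + M ⊗ₖ Q).det = (s.map fun μ => (P + μ • Q).det).prod := by
  have heval (μ : R) : (P.map C + (X : R[X]) • Q.map C).det.eval μ = (P + μ • Q).det := by
    rw [← coe_evalRingHom, RingHom.map_det]
    congr 1
    ext i j
    simp [mul_comm μ]
  simp only [det_one_kronecker_add_kronecker, det_aeval_eq_prod_of_charpoly_eq_prod M hs, heval]

theorem charmatrix_one_kronecker_sub_kronecker (A D : Matrix n n R) (L : Matrix m m R) :
    ((1 : Matrix m m R) ⊗ₖ A - L ⊗ₖ D).charmatrix =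
      (1 : Matrix m m R[X]) ⊗ₖ A.charmatrix + L.map C ⊗ₖ D.map C := by
  ext1 ⟨i, k⟩ ⟨j, l⟩
  by_cases hij : i = j <;> by_cases hkl : k = l <;>
    simp [hij, hkl, sub_add, neg_add_eq_sub]

theorem charmatrix_sub_smul (A D : Matrix n n R) (μ : R) :
    (A - μ • D).charmatrix = A.charmatrix + C μ • D.map C := by
  ext1 i j
  simp [charmatrix_apply, sub_add]

theorem stmt13_general (A D : Matrix n n R) (L : Matrix m m R) {s : Multiset R}
    (hs : L.charpoly = (s.map fun μ => X - C μ).prod) :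
    ((1 : Matrix m m R) ⊗ₖ A - L ⊗ₖ D).charpoly =
      (s.map fun μ => (A - μ • D).charpoly).prod := by
  have hsC : (L.map C).charpoly = ((s.map C).map fun μ => X - C μ).prod := by
    simp [charpoly_map, hs, Polynomial.map_multiset_prod]
  simp only [charpoly, charmatrix_one_kronecker_sub_kronecker,
    det_one_kronecker_add_kronecker_of_charpoly_eq_prod _ hsC, Multiset.map_map,
    Function.comp_apply, charmatrix_sub_smul]

end

/-- Over `ℂ`, the characteristic polynomial of `I_N ⊗ A - L ⊗ (BC)` factors
as the product over the eigenvalues `μ` of `L` (listed with algebraic multiplicity, i.e. the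
roots of the characteristic polynomial of `L`) of `det(s I_n - A + μ BC)`, i.e. of the
characteristic polynomials of `A - μ • BC`. -/
theorem stmt13 {n r N : ℕ}
    (A : Matrix (Fin n) (Fin n) ℂ) (B : Matrix (Fin n) (Fin r) ℂ) (C : Matrix (Fin r) (Fin n) ℂ)
    (L : Matrix (Fin N) (Fin N) ℂ) :
    Matrix.charpoly ((1 : Matrix (Fin N) (Fin N) ℂ) ⊗ₖ A - L ⊗ₖ (B * C)) =
      ((Matrix.charpoly L).roots.map fun μ => Matrix.charpoly (A - μ • (B * C))).prod :=
  stmt13_general A (B * C) L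
    ((IsAlgClosed.splits _).eq_prod_roots_of_monic L.charpoly_monic)
end
end

section
/- Consider a differently weighted MIMO networked relative coupling system with A ∈ ℝ^{n×n} (n ≥ 1), B = [b₁,…,b_r] ∈ ℝ^{n×r}, C ∈ ℝ^{r×n} with rows c₁,…,c_r, digraph G_sys on {1,…,N} without self-loops, and driving set I_u. If some vertex i ∈ {1,…,N} is not input-reachable, then for every choice of weight vectors w^{(1)},…,w^{(r)} ∈ ℝ^{|E|}, the pair (A_sys(w^{(1)},…,w^{(r)}), B_sys) is not controllable; in particular, the system is not structurally controllable. (Global input-reachability is thus necessary for structural controllability in all three interaction fashions.) -/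
open Matrix
open scoped Kronecker

noncomputable section

/-- The rank-one matrix `b_k c_k` formed by the `k`-th column of `B` and the `k`-th row of `C`. -/
def colRow {n r : ℕ} (B : Matrix (Fin n) (Fin r) ℝ) (C : Matrix (Fin r) (Fin n) ℝ) (k : Fin r) :
    Matrix (Fin n) (Fin n) ℝ :=
  Matrix.of fun i j => B i k * C k j

/-- Lumped state matrix of the differently weighted MIMO NRCS:
`A_sys = I_N ⊗ A - ∑ₖ L(w⁽ᵏ⁾) ⊗ (b_k c_k)`. -/
def asysD {n r N : ℕ} (A : Matrix (Fin n) (Fin n) ℝ) (B : Matrix (Fin n) (Fin r) ℝ)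
    (C : Matrix (Fin r) (Fin n) ℝ) (E : Finset (Fin N × Fin N))
    (ws : Fin r → Fin N × Fin N → ℝ) : Matrix (Fin N × Fin n) (Fin N × Fin n) ℝ :=
  (1 : Matrix (Fin N) (Fin N) ℝ) ⊗ₖ A - ∑ k : Fin r, lapMat E (ws k) ⊗ₖ colRow B C k

/-!
The vertices that are not input-reachable receive neither an external input nor an edge from an
input-reachable vertex. Ordering the vertices with these last, every Laplacian is block
upper triangular, hence so are the lumped state matrix and its powers. The input matrix
vanishes on the last block of rows, so every row of the Kalman matrix in that block is zero.
-/

section Controllability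

variable {R ι κ α : Type*}

theorem blockTriangular_kronecker_left [MulZeroClass R] [LT α] {b : ι → α} {M : Matrix ι ι R}
    (hM : M.BlockTriangular b) (M' : Matrix κ κ R) :
    (M ⊗ₖ M').BlockTriangular (b ∘ Prod.fst) := by
  rintro ⟨i, x⟩ ⟨j, y⟩ hij
  rw [Matrix.kronecker_apply, hM hij, zero_mul]

theorem rank_lt_card_of_row_eq_zero [CommSemiring R] [StrongRankCondition R] [Fintype ι]
    [Fintype κ] (M : Matrix ι κ R) {p : ι} (hp : M.row p = 0) : M.rank < Fintype.card ι := by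
  classical
  have hsupp : Function.support M.row ⊆ (Finset.univ.erase p : Finset ι) := by
    intro q hq
    have hqp : q ≠ p := fun h => hq (h ▸ hp)
    simpa using hqp
  exact (rank_le_card_of_support_subset M _ hsupp).trans_lt
    (Finset.card_erase_lt_of_mem (Finset.mem_univ p))

theorem not_isCtrb_of_blockTriangular [CommRing R] [Nontrivial R] [Fintype ι] [Fintype κ]
    [DecidableEq ι] [LinearOrder α] {b : ι → α} {M : Matrix ι ι R} {Q : Matrix ι κ R}
    (hM : M.BlockTriangular b) {p : ι} (hQ : ∀ q, b p ≤ b q → Q.row q = 0) : ¬ IsCtrb M Q := by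
  have hrow (m : ℕ) (k : κ) : (M ^ m * Q) p k = 0 := by
    rw [Matrix.mul_apply]
    refine Finset.sum_eq_zero fun q _ => ?_
    rcases le_or_gt (b p) (b q) with hpq | hqp
    · have hQqk : Q q k = 0 := congrFun (hQ q hpq) k
      rw [hQqk, mul_zero]
    · rw [hM.pow m hqp, zero_mul]
  exact (rank_lt_card_of_row_eq_zero _ (funext fun jk => hrow jk.1 jk.2)).ne

end Controllability

section Network

variable {R : Type*} [CommRing R] {N : ℕ} {E : Finset (Fin N × Fin N)} {Iu : Finset (Fin N)}

theorem inputReachable_of_mem {i : Fin N} (hi : i ∈ Iu) : inputReachable E Iu i :=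
  ⟨i, hi, .refl⟩

theorem inputReachable.tail {i j : Fin N} (hj : inputReachable E Iu j) (hji : (j, i) ∈ E) :
    inputReachable E Iu i :=
  let ⟨s, hs, hsj⟩ := hj
  ⟨s, hs, hsj.tail hji⟩

-- `Prop` is ordered by `False < True`, so the vertices that are not input-reachable come last.
theorem blockTriangular_lapMat (w : Fin N × Fin N → R) :
    (lapMat E w).BlockTriangular fun i => ¬ inputReachable E Iu i := by
  intro i j hlt
  obtain ⟨hi, hj⟩ : ¬ inputReachable E Iu i ∧ inputReachable E Iu j :=
    (Classical.not_imp.1 hlt.not_ge).imp_right not_not.1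
  have hij : i ≠ j := fun h => hi (h ▸ hj)
  have hji : (j, i) ∉ E := fun h => hi (hj.tail h)
  simp [lapMat, hij, hji]

theorem deltaMat_kronecker_row_eq_zero {ι κ : Type*} (B : Matrix ι κ R) {i : Fin N} (hi : i ∉ Iu)
    (x : ι) : ((deltaMat Iu : Matrix (Fin N) {i // i ∈ Iu} R) ⊗ₖ B).row (i, x) = 0 := by
  ext ⟨⟨j, hj⟩, y⟩
  have hij : i ≠ j := fun h => hi (h ▸ hj)
  simp [deltaMat, hij]

end Network

theorem stmt14_general {R ι κ K : Type*} [CommRing R] [Nontrivial R] [Fintype ι] [DecidableEq ι]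
    [Nonempty ι] [Fintype κ] [Fintype K] {N : ℕ} (A : Matrix ι ι R) (B : Matrix ι κ R)
    (H : K → Matrix ι ι R) (E : Finset (Fin N × Fin N)) (Iu : Finset (Fin N)) (i : Fin N)
    (hi : ¬ inputReachable E Iu i) (ws : K → Fin N × Fin N → R) :
    ¬ IsCtrb ((1 : Matrix (Fin N) (Fin N) R) ⊗ₖ A - ∑ k, lapMat E (ws k) ⊗ₖ H k)
      ((deltaMat Iu : Matrix (Fin N) {i // i ∈ Iu} R) ⊗ₖ B) := by
  obtain ⟨x⟩ := ‹Nonempty ι›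
  have htri : ((1 : Matrix (Fin N) (Fin N) R) ⊗ₖ A -
      ∑ k, lapMat E (ws k) ⊗ₖ H k).BlockTriangular
        ((fun j => ¬ inputReachable E Iu j) ∘ Prod.fst) :=
    (blockTriangular_kronecker_left blockTriangular_one A).sub <|
      sum_mem (S := blockTriangularSubsemiring R _) fun k _ =>
        blockTriangular_kronecker_left (blockTriangular_lapMat (ws k)) (H k)
  refine not_isCtrb_of_blockTriangular htri (p := (i, x)) fun ⟨j, y⟩ hle => ?_
  have hj : ¬ inputReachable E Iu j := hle hi
  exact deltaMat_kronecker_row_eq_zero B (fun hmem => hj (inputReachable_of_mem hmem)) y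

/-- If some vertex of the network is not input-reachable, then no choice of
weight vectors makes the differently weighted MIMO NRCS controllable; in particular the system
is not structurally controllable. -/
theorem stmt14 {n r N : ℕ} (hn : 1 ≤ n)
    (A : Matrix (Fin n) (Fin n) ℝ) (B : Matrix (Fin n) (Fin r) ℝ) (C : Matrix (Fin r) (Fin n) ℝ)
    (E : Finset (Fin N × Fin N)) (hE : ∀ e ∈ E, e.1 ≠ e.2)
    (Iu : Finset (Fin N))
    (i : Fin N) (hi : ¬ inputReachable E Iu i) :
    ∀ ws : Fin r → Fin N × Fin N → ℝ,
      ¬ IsCtrb (asysD A B C E ws) ((deltaMat Iu : Matrix (Fin N) {i // i ∈ Iu} ℝ) ⊗ₖ B) := by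
  have : Nonempty (Fin n) := ⟨⟨0, hn⟩⟩
  exact stmt14_general A B (colRow B C) E Iu i hi
end
end
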